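/- arXiv:math/0308049 — 2 statements merged into one kernel-verified Lean document; each statement's English description precedes it below -/
import Mathlib

section
/- Let p be a prime, let H be an abelian group (written additively) on which the map x ↦ p·x is a bijection, and let E be a nontrivial finite elementary abelian p-group acting on H by automorphisms. Then H is the sum of the fixed-point subgroups of the index-p subgroups of E: H = Σ { C_H(E₀) : E₀ ≤ E, [E : E₀] = p }, i.e., these subgroups generate H. -/
/-!
The proof averages over the `𝔽_p`-valued characters `χ` of `E`. For `c ∈ 𝔽_p` and `h ∈ H` let
`S_χ,c(h)` be the sum of the `t • h` over the fibre `χ t = c`. Since `ker χ` permutes each fibre,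
`S_χ,c(h)` is fixed by `ker χ`, a subgroup which has index `p` unless `χ` is trivial, in which case
it is all of `E`. On the other hand
`∑_χ (S_χ,0(h) - S_χ,1(h)) = |Hom(E, 𝔽_p)| • h`:
the coefficient of `t • h` is `#{χ | χ t = 0} - #{χ | χ t = 1}`, which for `t ≠ 1` vanishes
because translation by a character `g` with `g t = 1` exchanges the two sets. As
`|Hom(E, 𝔽_p)|` is a power of `p` and `H` is `p`-divisible, every element of `H` has this form.
-/


/-- For a group `E` acting by automorphisms on an abelian group `H` and a subgroup
`E₀ ≤ E`, the fixed-point subgroup `C_H(E₀) = {h ∈ H : s • h = h for all s ∈ E₀}`. -/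
def fixedAddSubgroup {E H : Type*} [Group E] [AddCommGroup H] [DistribMulAction E H]
    (E₀ : Subgroup E) : AddSubgroup H where
  carrier := {h | ∀ s ∈ E₀, s • h = h}
  zero_mem' := fun s _ => smul_zero s
  add_mem' := fun ha hb s hs => by rw [smul_add, ha s hs, hb s hs]
  neg_mem' := fun ha s hs => by rw [smul_neg, ha s hs]

/-- Characters with values in `𝔽_p` separate the points of an elementary abelian `p`-group. -/
lemma exists_char_eq_one {p : ℕ} (hp : p.Prime) {E : Type*} [CommGroup E]
    (hE : ∀ s : E, s ^ p = 1) {s : E} (hs : s ≠ 1) :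
    ∃ g : E →* Multiplicative (ZMod p), g s = Multiplicative.ofAdd 1 := by
  have : Fact p.Prime := ⟨hp⟩
  let : Module (ZMod p) (Additive E) :=
    AddCommGroup.zmodModule (n := p) fun x => congrArg Additive.ofMul (hE x.toMul)
  have hs' : Additive.ofMul s ≠ 0 := fun h => hs (ofMul_eq_zero.mp h)
  obtain ⟨φ, hφ⟩ : ∃ φ : Module.Dual (ZMod p) (Additive E), φ (Additive.ofMul s) ≠ 0 := by
    by_contra! h
    exact hs' ((Module.forall_dual_apply_eq_zero_iff (ZMod p) _).mp h)
  refine ⟨((φ (Additive.ofMul s))⁻¹ • φ).toAddMonoidHom.toMultiplicativeRight, ?_⟩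
  change Multiplicative.ofAdd ((φ (Additive.ofMul s))⁻¹ * φ (Additive.ofMul s)) = _
  rw [inv_mul_cancel₀ hφ]

lemma index_ker_eq {p : ℕ} (hp : p.Prime) {E : Type*} [CommGroup E]
    {χ : E →* Multiplicative (ZMod p)} (hχ : χ ≠ 1) : χ.ker.index = p := by
  have : Fact p.Prime := ⟨hp⟩
  have hcard : Nat.card (Multiplicative (ZMod p)) = p := by
    rw [Nat.card_congr Multiplicative.toAdd, Nat.card_zmod]
  have hdvd : χ.ker.index ∣ p := by
    rw [Subgroup.index_ker]
    exact (Subgroup.card_subgroup_dvd_card _).trans hcard.dvd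
  refine (hp.eq_one_or_self_of_dvd _ hdvd).resolve_left fun h => hχ ?_
  rwa [Subgroup.index_eq_one, MonoidHom.ker_eq_top_iff] at h

lemma fixedAddSubgroup_anti {E H : Type*} [Group E] [AddCommGroup H] [DistribMulAction E H]
    {A B : Subgroup E} (h : A ≤ B) :
    fixedAddSubgroup (H := H) B ≤ fixedAddSubgroup A :=
  fun _ hx s hs => hx s (h hs)

lemma fibre_sum_mem {E H M : Type*} [CommGroup E] [Fintype E] [AddCommGroup H]
    [DistribMulAction E H] [Group M] [DecidableEq M] (χ : E →* M) (c : M) (h : H) :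
    ∑ t : E, (if χ t = c then t • h else 0) ∈ fixedAddSubgroup (H := H) χ.ker := by
  intro s hs
  rw [Finset.smul_sum]
  refine Fintype.sum_equiv (Equiv.mulLeft s) _ _ fun t => ?_
  have hs : χ s = 1 := hs
  simp [hs, mul_smul, smul_ite]

/-- Orthogonality: averaging the differences of two fibre sums over all characters recovers a
multiple of `h`. -/
lemma sum_char_eq {p : ℕ} (hp : p.Prime) {E H : Type*} [CommGroup E] [Fintype E]
    (hE : ∀ s : E, s ^ p = 1) [AddCommGroup H] [DistribMulAction E H]
    [Fintype (E →* Multiplicative (ZMod p))] (h : H) :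
    ∑ χ : E →* Multiplicative (ZMod p),
      (∑ t : E, (if χ t = 1 then t • h else 0) -
        ∑ t : E, (if χ t = Multiplicative.ofAdd 1 then t • h else 0)) =
      Fintype.card (E →* Multiplicative (ZMod p)) • h := by
  classical
  have : Fact p.Prime := ⟨hp⟩
  have hne : (1 : Multiplicative (ZMod p)) ≠ Multiplicative.ofAdd 1 := fun h =>
    zero_ne_one (α := ZMod p) (congrArg Multiplicative.toAdd h)
  rw [Finset.sum_sub_distrib, Finset.sum_comm, Finset.sum_comm (t := (Finset.univ : Finset E)),
    ← Finset.sum_sub_distrib, Finset.sum_eq_single 1]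
  · simp [hne]
  · intro t _ ht
    obtain ⟨g, hg⟩ := exists_char_eq_one hp hE ht
    rw [sub_eq_zero]
    refine Fintype.sum_equiv (Equiv.mulRight g) _ _ fun χ => ?_
    simp [hg]
  · simp

/-- If a nontrivial finite elementary abelian `p`-group `E` acts by automorphisms on an
abelian group `H` on which multiplication by `p` is a bijection, then `H` is the sum of
the fixed-point subgroups of the index-`p` subgroups of `E`. -/
theorem sum_of_hyperplane_fixed_points (p : ℕ) (hp : p.Prime)
    (E H : Type*) [CommGroup E] [Fintype E] [Nontrivial E]
    (hE : ∀ s : E, s ^ p = 1)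
    [AddCommGroup H] (hbij : Function.Bijective (fun x : H => p • x))
    [DistribMulAction E H] :
    (⨆ (E₀ : Subgroup E) (_ : E₀.index = p), fixedAddSubgroup (H := H) E₀) = ⊤ := by
  classical
  have : Fact p.Prime := ⟨hp⟩
  have : Finite (E →* Multiplicative (ZMod p)) :=
    have : Finite (Multiplicative (ZMod p)) := inferInstanceAs (Finite (ZMod p))
    Finite.of_injective _ DFunLike.coe_injective
  let : Fintype (E →* Multiplicative (ZMod p)) := Fintype.ofFinite _
  have hle : ∀ χ : E →* Multiplicative (ZMod p), fixedAddSubgroup (H := H) χ.ker ≤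
      ⨆ (E₀ : Subgroup E) (_ : E₀.index = p), fixedAddSubgroup (H := H) E₀ := by
    have key : ∀ χ : E →* Multiplicative (ZMod p), χ ≠ 1 → fixedAddSubgroup (H := H) χ.ker ≤
        ⨆ (E₀ : Subgroup E) (_ : E₀.index = p), fixedAddSubgroup (H := H) E₀ := fun χ hχ =>
      le_iSup₂_of_le χ.ker (index_ker_eq hp hχ) le_rfl
    intro χ
    by_cases hχ : χ = 1
    · -- `C_H(E)` lies in `C_H(ker g)` for a nontrivial `g`, which exists as `E` is nontrivial.
      obtain ⟨s, hs⟩ := exists_ne (1 : E)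
      obtain ⟨g, hg⟩ := exists_char_eq_one hp hE hs
      have hg1 : g ≠ 1 := by
        rintro rfl
        exact zero_ne_one (α := ZMod p) (congrArg Multiplicative.toAdd hg)
      refine (fixedAddSubgroup_anti ?_).trans (key g hg1)
      simp [hχ]
    · exact key χ hχ
  obtain ⟨n, hn⟩ : ∃ n, Nat.card (E →* Multiplicative (ZMod p)) = p ^ n := by
    refine IsPGroup.iff_card.mp fun χ => ⟨1, ?_⟩
    ext t
    rw [pow_one, MonoidHom.pow_apply, ← map_pow, hE, map_one, MonoidHom.one_apply]
  rw [eq_top_iff]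
  rintro x -
  obtain ⟨h, rfl⟩ : ∃ h : H, p ^ n • h = x := by
    have := hbij.surjective.iterate n x
    rwa [smul_iterate] at this
  rw [← hn, Nat.card_eq_fintype_card, ← sum_char_eq hp hE]
  exact sum_mem fun χ _ => hle χ (sub_mem (fibre_sum_mem χ _ h) (fibre_sum_mem χ _ h))
end

section
/- Let p be a prime, let H be an abelian group (written additively) on which the map x ↦ p·x is a bijection, and let E be a finite elementary abelian p-group of rank at least 2 acting on H by automorphisms. Then H is generated by the fixed-point subgroups of the nontrivial elements of E: H = Σ { C_H(s) : s ∈ E, s ≠ 1 }. -/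
/-!
Write `N_c = ∑_{i < p} c ^ i`; since `c ^ p = 1`, its values are fixed by `c`. As `E` is not
cyclic, pick `b ≠ 1` and `a ∉ ⟨b⟩`, and expand in two ways, for `h : H`,

  `∑_{i < p} N_{a b ^ i} h = ∑_{i < p} ∑_{j < p} a ^ j b ^ (i j) h = ∑_{j < p} N_{b ^ j} (a ^ j h)`.

The left side is a sum of fixed points of the nontrivial elements `a b ^ i`. On the right, the
term `j = 0` is `p h`, and the other terms are fixed by the nontrivial elements `b ^ j`. Hence
`p h` lies in the sum of the fixed-point subgroups, and every element of `H` has the form `p h`.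
-/

/-- For a group `E` acting by automorphisms on an abelian group `H` and an element
`s ∈ E`, the fixed-point subgroup `C_H(s) = {h ∈ H : s • h = h}`. -/
def fixedAddSubgroupOf {E H : Type*} [Group E] [AddCommGroup H] [DistribMulAction E H]
    (s : E) : AddSubgroup H where
  carrier := {h | s • h = h}
  zero_mem' := smul_zero s
  add_mem' := fun ha hb => by rw [Set.mem_setOf_eq, smul_add, ha, hb]
  neg_mem' := fun ha => by rw [Set.mem_setOf_eq, smul_neg, ha]

theorem norm_mem_fixedAddSubgroupOf {E H : Type*} [Group E] [AddCommGroup H]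
    [DistribMulAction E H] {p : ℕ} {c : E} (hc : c ^ p = 1) (h : H) :
    (∑ i ∈ Finset.range p, c ^ i • h) ∈ fixedAddSubgroupOf (H := H) c := by
  change c • (∑ i ∈ Finset.range p, c ^ i • h) = ∑ i ∈ Finset.range p, c ^ i • h
  -- Multiplication by `c` shifts the sum by one index, and the two end terms agree.
  have h1 := Finset.sum_range_succ (fun i => c ^ i • h) p
  rw [Finset.sum_range_succ', hc, pow_zero] at h1
  rw [Finset.smul_sum, ← add_right_cancel h1]
  simp only [smul_smul, pow_succ']

/-- If a finite elementary abelian `p`-group `E` of rank at least 2 (i.e. non-cyclic)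
acts by automorphisms on an abelian group `H` on which multiplication by `p` is a
bijection, then `H` is generated by the fixed-point subgroups of the nontrivial
elements of `E`. -/
theorem sum_of_element_fixed_points (p : ℕ) (hp : p.Prime)
    (E H : Type*) [CommGroup E] [Fintype E] (hE : ∀ s : E, s ^ p = 1)
    (hrank : ¬ IsCyclic E)
    [AddCommGroup H] (hbij : Function.Bijective (fun x : H => p • x))
    [DistribMulAction E H] :
    (⨆ (s : E) (_ : s ≠ 1), fixedAddSubgroupOf (H := H) s) = ⊤ := by
  have : Fact p.Prime := ⟨hp⟩
  have hgen : ∀ g : E, ∃ a : E, a ∉ Subgroup.zpowers g := by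
    intro g
    by_contra! hg
    exact hrank ⟨g, hg⟩
  obtain ⟨b, hb⟩ := hgen 1
  have hb1 : b ≠ 1 := by
    rintro rfl
    exact hb (one_mem _)
  obtain ⟨a, ha⟩ := hgen b
  have hab : ∀ i : ℕ, a * b ^ i ≠ 1 := by
    intro i hi
    apply ha
    rw [eq_inv_of_mul_eq_one_left hi]
    exact inv_mem (pow_mem (Subgroup.mem_zpowers b) i)
  have hbj : ∀ j : ℕ, j + 1 < p → b ^ (j + 1) ≠ 1 := by
    intro j hj
    apply pow_ne_one_of_lt_orderOf (Nat.succ_ne_zero j)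
    rwa [orderOf_eq_prime (hE b) hb1]
  rw [eq_top_iff]
  rintro x -
  obtain ⟨h, rfl⟩ := hbij.2 x
  set S : AddSubgroup H := ⨆ (s : E) (_ : s ≠ 1), fixedAddSubgroupOf (H := H) s with hS
  have hN : ∀ (c : E) (_ : c ≠ 1) (y : H), (∑ i ∈ Finset.range p, c ^ i • y) ∈ S :=
    fun c hc y => (le_iSup₂_of_le c hc le_rfl : fixedAddSubgroupOf (H := H) c ≤ S)
      (norm_mem_fixedAddSubgroupOf (hE c) y)
  have hswap : (∑ i ∈ Finset.range p, ∑ j ∈ Finset.range p, (a * b ^ i) ^ j • h)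
      = ∑ j ∈ Finset.range p, ∑ i ∈ Finset.range p, (b ^ j) ^ i • (a ^ j • h) := by
    rw [Finset.sum_comm]
    refine Finset.sum_congr rfl fun j _ => Finset.sum_congr rfl fun i _ => ?_
    rw [smul_smul, mul_pow, mul_comm, pow_right_comm]
  have hleft := S.sum_mem fun i (_ : i ∈ Finset.range p) => hN (a * b ^ i) (hab i) h
  obtain ⟨q, rfl⟩ : ∃ q, p = q + 1 := ⟨p - 1, (Nat.sub_add_cancel hp.one_le).symm⟩
  rw [hswap, Finset.sum_range_succ'] at hleft
  have hright := S.sum_mem fun j (hj : j ∈ Finset.range q) =>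
    hN (b ^ (j + 1)) (hbj j (by simpa using hj)) (a ^ (j + 1) • h)
  simpa using (S.add_mem_cancel_left hright).1 hleft
end
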